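/- Let d be an odd prime and let α ∈ (0, 1/6). Then for every ε ∈ (0, 1) there exist a constant C > 0 and infinitely many positive integers m such that for each such m there is a (d+1)-regular finite simple graph G_m on m vertices satisfying: (1) girth(G_m) ≥ 2α·log_{2d-1}(m); and (2) the adjacency matrix A(G_m) has ⌊α·log_d(m)⌋ distinct eigenvalues λ_1, …, λ_{⌊α log_d(m)⌋}, each admitting a (k, ε)-localized eigenvector for some k ≤ C·m^α. -/

import Mathlib

open Classical

noncomputable section

namespace Formal

variable {V : Type*} [Fintype V] [DecidableEq V]

/-- The real adjacency matrix of a finite simple graph. -/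
def adjMat (G : SimpleGraph V) : Matrix V V ℝ :=
  letI := Classical.decRel G.Adj
  SimpleGraph.adjMatrix ℝ G

lemma adjMat_isHermitian (G : SimpleGraph V) : (adjMat G).IsHermitian := by
  letI := Classical.decRel G.Adj
  unfold adjMat
  rw [Matrix.IsHermitian, Matrix.conjTranspose_eq_transpose_of_trivial]
  exact SimpleGraph.isSymm_adjMatrix G

/-- `G` is `k`-regular: every vertex has exactly `k` neighbours. -/
def IsRegular (G : SimpleGraph V) (k : ℕ) : Prop :=
  ∀ v : V, (G.neighborSet v).ncard = k

/-- The eigenvalues (with multiplicity) of the adjacency matrix, indexed by vertices. -/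
def eigs (G : SimpleGraph V) : V → ℝ :=
  (adjMat_isHermitian G).eigenvalues

/-- The absolute values of the adjacency eigenvalues, sorted in increasing order. -/
def sortedAbsEigs (G : SimpleGraph V) : List ℝ :=
  (Finset.univ.val.map fun i => |eigs G i|).sort (· ≤ ·)

/-- `λ(G)`: the second largest absolute value of an eigenvalue (with multiplicity). -/
def secondLargestAbsEig (G : SimpleGraph V) : ℝ :=
  (sortedAbsEigs G).getD (Fintype.card V - 2) 0

/-- `λ₃(G)`: the third largest absolute value of an eigenvalue (with multiplicity). -/
def thirdLargestAbsEig (G : SimpleGraph V) : ℝ :=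
  (sortedAbsEigs G).getD (Fintype.card V - 3) 0

/-- `μ` has a `(k, ε)`-localized (ℓ²-normalized) eigenvector for `A(G)`. -/
def HasLocalizedEigenvector (G : SimpleGraph V) (μ : ℝ) (k : ℕ) (ε : ℝ) : Prop :=
  ∃ v : V → ℝ, (adjMat G).mulVec v = μ • v ∧ (∑ x, (v x) ^ 2) = 1 ∧
    ∃ S : Finset V, S.card = k ∧ ε ≤ ∑ x ∈ S, (v x) ^ 2

/-- There are `r` distinct eigenvalues of `A(G)`, each with a `(k, ε)`-localized
eigenvector for some `k ≤ bound`. -/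
def LocalizedSpectrum (G : SimpleGraph V) (r : ℕ) (ε bound : ℝ) : Prop :=
  ∃ Λ : Finset ℝ, Λ.card = r ∧
    ∀ μ ∈ Λ, ∃ k : ℕ, (k : ℝ) ≤ bound ∧ HasLocalizedEigenvector G μ k ε

/-- `girth(G) ≥ x` for a real number `x` (`girth = ⊤` counts as `≥ x`). -/
def girthGe {W : Type*} (G : SimpleGraph W) (x : ℝ) : Prop :=
  ∀ g : ℕ, G.girth = g → x ≤ g

/-- `girth(G) > x` for a real number `x` (`girth = ⊤` counts as `> x`). -/
def girthGt {W : Type*} (G : SimpleGraph W) (x : ℝ) : Prop :=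
  ∀ g : ℕ, G.girth = g → x < g

/-- The `j`-th prime, so `nthPrime 1 = 2`, `nthPrime 2 = 3`, ..., `nthPrime 10 = 29`. -/
def nthPrime (j : ℕ) : ℕ :=
  Nat.nth Nat.Prime (j - 1)

/-!
Take `D` eigenvalues of the adjacency matrix of a cycle of length `2 * D + 3`, and cover the cycle
twice, with signs `±`, by graphs with large fibres. The remaining `d - 1` edges at each vertex go to
boundary vertices that have one neighbour of either sign over the same position. An eigenvector of
the cycle, lifted with opposite signs to the two covers, then cancels at the boundary, so it extends
by zero however the graph is completed. The boundary is completed to a regular graph by a bipartite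
graph in which further outer vertices take part.

Both graphs are found by the same argument. In a partial solution of girth at least `g`, a missing
edge `uv` can be added by switching: an edge `xy` far away from `u` and `v` is replaced by `uy` and
`xv`, which creates no cycle shorter than `g`. Such an edge exists as soon as the vertices of each
type outnumber balls of radius `g`. For the support, on which the eigenvectors live, these balls
must be counted sharply: as a boundary vertex has only two neighbours in the support,
non-backtracking paths branch at a rate `t` less than the square root of `2 * d - 1`, so that a
support of size `m ^ α` is compatible with a girth of `2 * α * log_{2d-1} m`.
-/

section Girth

variable {U : Type*} {G : SimpleGraph U} {g : ℕ∞} {u v x y : U}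

lemma le_egirth_iff_forall_adj : g ≤ G.egirth ↔
    ∀ ⦃x y⦄, G.Adj x y → g ≤ (G.deleteEdges {s(x, y)}).edist x y + 1 := by
  rw [SimpleGraph.le_egirth]
  refine ⟨fun h x y hxy => ?_, fun h x c hc => ?_⟩
  · by_cases hdist : (G.deleteEdges {s(x, y)}).edist y x = ⊤
    · rw [SimpleGraph.edist_comm, hdist]
      exact le_top
    obtain ⟨p, hp⟩ := SimpleGraph.exists_walk_of_edist_ne_top hdist
    have hle := G.deleteEdges_le {s(x, y)}
    have hcycle : ((p.bypass.mapLe hle).cons hxy).IsCycle := by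
      refine (SimpleGraph.Walk.cons_isCycle_iff _ _).2 ⟨p.bypass_isPath.mapLe hle, fun hmem => ?_⟩
      rw [SimpleGraph.Walk.edges_mapLe_eq_edges] at hmem
      simpa using p.bypass.edges_subset_edgeSet hmem
    have hlength : (p.bypass.length : ℕ∞) ≤ p.length := mod_cast p.length_bypass_le_length
    rw [SimpleGraph.edist_comm, ← hp]
    exact (h x _ hcycle).trans (by simpa using hlength)
  · cases c with
    | nil => exact (SimpleGraph.Walk.not_isCycle_nil hc).elim
    | cons hxy p =>
      have hdist :=
        SimpleGraph.edist_le (p.toDeleteEdge _ ((SimpleGraph.Walk.cons_isCycle_iff _ _).1 hc).2)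
      rw [SimpleGraph.edist_comm] at hdist
      exact (h hxy).trans (by simpa using hdist)

lemma edist_le_or_of_walk_sup_edge (p : (G ⊔ SimpleGraph.edge u v).Walk x y) :
    G.edist x y ≤ p.length ∨ G.edist x u + 1 + G.edist v y ≤ p.length ∨
      G.edist x v + 1 + G.edist u y ≤ p.length := by
  induction p with
  | nil => simp
  | @cons x z y hxz p ih =>
    simp only [add_assoc] at ih
    rw [SimpleGraph.sup_adj, SimpleGraph.edge_adj] at hxz
    rw [SimpleGraph.Walk.length_cons, Nat.cast_add, Nat.cast_one]
    rcases hxz with hxz | ⟨⟨rfl, rfl⟩ | ⟨rfl, rfl⟩, -⟩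
    · have hcons {c : U} {s : ℕ∞} (h : G.edist z c + s ≤ p.length) :
          G.edist x c + s ≤ p.length + 1 := by
        calc G.edist x c + s ≤ 1 + G.edist z c + s := by
              gcongr
              rw [← SimpleGraph.edist_eq_one_iff_adj.2 hxz]
              exact SimpleGraph.edist_triangle
          _ ≤ p.length + 1 := by rw [add_assoc, add_comm 1]; gcongr
      simp only [add_assoc]
      exact ih.imp (fun h => by simpa using hcons (c := y) (s := 0) (by simpa using h))
        (Or.imp hcons hcons)
    · rw [SimpleGraph.edist_self, zero_add, add_comm 1]
      rcases ih with h | h | h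
      · exact Or.inr (Or.inl (by gcongr))
      · refine Or.inr (Or.inl ?_)
        gcongr
        exact le_add_self.trans (le_add_self.trans h)
      · exact Or.inl ((le_add_self.trans (le_add_self.trans h)).trans le_self_add)
    · rw [SimpleGraph.edist_self, zero_add, add_comm 1]
      rcases ih with h | h | h
      · exact Or.inr (Or.inr (by gcongr))
      · exact Or.inl ((le_add_self.trans (le_add_self.trans h)).trans le_self_add)
      · refine Or.inr (Or.inr ?_)
        gcongr
        exact le_add_self.trans (le_add_self.trans h)

lemma edist_le_or_of_sup_edge (G : SimpleGraph U) (u v x y : U) :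
    G.edist x y ≤ (G ⊔ SimpleGraph.edge u v).edist x y ∨
      G.edist x u + 1 + G.edist v y ≤ (G ⊔ SimpleGraph.edge u v).edist x y ∨
        G.edist x v + 1 + G.edist u y ≤ (G ⊔ SimpleGraph.edge u v).edist x y := by
  simp only [← min_le_iff]
  exact le_iInf fun p => by simpa only [min_le_iff] using edist_le_or_of_walk_sup_edge p

lemma le_egirth_sup_edge (hG : g ≤ G.egirth) (huv : g ≤ G.edist u v + 1) :
    g ≤ (G ⊔ SimpleGraph.edge u v).egirth := by
  rw [le_egirth_iff_forall_adj] at hG ⊢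
  intro x y hxy
  by_cases he : s(x, y) = s(u, v)
  · have hle : (G ⊔ SimpleGraph.edge u v).deleteEdges {s(x, y)} ≤ G := by
      simp [SimpleGraph.deleteEdges_sup, he]
    have hdist : G.edist x y = G.edist u v := by
      rcases Sym2.eq_iff.1 he with ⟨rfl, rfl⟩ | ⟨rfl, rfl⟩
      exacts [rfl, SimpleGraph.edist_comm]
    grw [huv, ← hdist, SimpleGraph.edist_anti hle]
  have hadj : G.Adj x y := by
    rw [SimpleGraph.sup_adj, SimpleGraph.adj_edge] at hxy
    exact hxy.resolve_right fun h => he h.1.symm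
  set G' := G.deleteEdges {s(x, y)}
  have hle : (G ⊔ SimpleGraph.edge u v).deleteEdges {s(x, y)} ≤ G' ⊔ SimpleGraph.edge u v := by
    rw [SimpleGraph.deleteEdges_sup]
    exact sup_le_sup_left (SimpleGraph.deleteEdges_le _) _
  -- A path of `G'` from `x` to `u` and one from `v` to `y` close up to a path of `G` along `xy`.
  have hdetour (a b : U) : G.edist a b ≤ G'.edist x a + 1 + G'.edist b y := calc
    G.edist a b ≤ G.edist x a + (G.edist x y + G.edist b y) := by
      rw [SimpleGraph.edist_comm (u := x) (v := a), SimpleGraph.edist_comm (u := b) (v := y)]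
      exact SimpleGraph.edist_triangle.trans (by gcongr; exact SimpleGraph.edist_triangle)
    _ ≤ G'.edist x a + 1 + G'.edist b y := by
      rw [SimpleGraph.edist_eq_one_iff_adj.2 hadj, add_assoc]
      gcongr <;> exact G.deleteEdges_le _
  grw [← SimpleGraph.edist_anti hle]
  rcases edist_le_or_of_sup_edge G' u v x y with h | h | h
  · grw [hG hadj, h]
  · grw [huv, hdetour u v, h]
  · grw [huv, SimpleGraph.edist_comm, hdetour v u, h]

lemma le_egirth_switch (hG : g ≤ G.egirth) (hxy : G.Adj x y) (huy : g ≤ G.edist u y + 1)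
    (hxu : g ≤ G.edist x u + 1) (hxv : g ≤ G.edist x v + 1) :
    g ≤ (G.deleteEdges {s(x, y)} ⊔ SimpleGraph.edge u y ⊔ SimpleGraph.edge x v).egirth := by
  have hle := G.deleteEdges_le {s(x, y)}
  have hdist (a b : U) : G.edist a b ≤ (G.deleteEdges {s(x, y)}).edist a b :=
    SimpleGraph.edist_anti hle
  have hcycle := le_egirth_iff_forall_adj.1 hG hxy
  refine le_egirth_sup_edge (le_egirth_sup_edge (hG.trans (SimpleGraph.egirth_anti hle)) ?_) ?_
  · grw [huy, hdist]
  rcases edist_le_or_of_sup_edge (G.deleteEdges {s(x, y)}) u y x v with h | h | h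
  · grw [hxv, hdist, h]
  · grw [hxu, hdist, ← h]
    rw [add_assoc]
    exact le_self_add
  · grw [hcycle, ← h]
    rw [add_assoc]
    exact le_self_add

lemma not_adj_and_ne_of_two_le_edist (h : 2 ≤ G.edist u v) : ¬ G.Adj u v ∧ u ≠ v := by
  rw [← not_or, ← SimpleGraph.edist_le_one_iff_adj_or_eq, not_le]
  exact (by norm_num : (1 : ℕ∞) < 2).trans_le h

lemma not_isAcyclic_of_forall_two_le_degree [Fintype U] [Nonempty U] (hG : ∀ v, 2 ≤ G.degree v) :
    ¬ G.IsAcyclic := by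
  intro hac
  obtain ⟨T, hGT, -, hT⟩ :=
    SimpleGraph.connected_top.exists_isTree_le_of_le_of_isAcyclic le_top hac
  have hcard : G.edgeFinset.card ≤ T.edgeFinset.card :=
    Finset.card_le_card (SimpleGraph.edgeFinset_mono hGT)
  have hdegrees : Fintype.card U * 2 ≤ 2 * G.edgeFinset.card := by
    rw [← G.sum_degrees_eq_twice_card_edges, ← smul_eq_mul]
    exact Finset.card_nsmul_le_sum _ _ _ fun v _ => hG v
  have := hT.card_edgeFinset
  lia

end Girth

section Balls

variable {U : Type*} [Fintype U] {G : SimpleGraph U} {r : ℕ}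

/-- The vertices joined to `w` by a path of length at most `r` that does not return to `p`. For
`p` adjacent to `w`, this is the part of a ball that lies beyond the directed edge from `p` to
`w`; for `p = w`, it is a full ball. -/
def pathBall (G : SimpleGraph U) (r : ℕ) (p w : U) : Finset U :=
  {z | ∃ q : G.Walk w z, q.IsPath ∧ q.length ≤ r ∧ p ∉ q.support.tail}

lemma pathBall_zero (p w : U) : pathBall G 0 p w = {w} := by
  ext z
  simp only [pathBall, Finset.mem_filter_univ, Finset.mem_singleton]
  constructor
  · rintro ⟨q, -, hq, -⟩
    exact (q.eq_of_length_eq_zero (Nat.le_zero.1 hq)).symm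
  · rintro rfl
    exact ⟨.nil, by simp⟩

lemma pathBall_succ_subset (p w : U) : pathBall G (r + 1) p w ⊆
    insert w (({c | G.Adj w c ∧ c ≠ p} : Finset U).biUnion (pathBall G r w)) := by
  intro z hz
  obtain ⟨q, hq, hr, hp⟩ := (Finset.mem_filter.1 hz).2
  cases q with
  | nil => exact Finset.mem_insert_self _ _
  | @cons _ c _ hwc q =>
    rw [SimpleGraph.Walk.cons_isPath_iff] at hq
    have hpc : c ≠ p := by
      rintro rfl
      exact hp (by simp)
    refine Finset.mem_insert_of_mem (Finset.mem_biUnion.2 ⟨c, by simp [hwc, hpc], ?_⟩)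
    exact Finset.mem_filter.2 ⟨Finset.mem_univ z, q, hq.1, Nat.succ_le_succ_iff.1 hr,
      fun hw => hq.2 (List.mem_of_mem_tail hw)⟩

lemma sum_adj_ne (ψ : U → ℝ) {p w : U} (hpw : G.Adj p w) :
    ∑ c with G.Adj w c ∧ c ≠ p, ψ c = ∑ c with G.Adj w c, ψ c - ψ p := by
  have hp : p ∈ ({c | G.Adj w c} : Finset U) := by simpa using hpw.symm
  rw [← Finset.sum_erase_eq_sub hp, ← Finset.filter_filter, Finset.filter_ne']

/-- `Ω` bounds the growth of the first step only, so that the bound applies both beyond a directed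
edge and around a root. -/
lemma card_pathBall_le {ψ : U → U → ℝ} {t : ℝ} (ht : 0 ≤ t) (hψ : ∀ p w, 1 ≤ ψ p w)
    (hstep : ∀ p w, G.Adj p w → ∑ c with G.Adj w c, ψ w c ≤ t * ψ p w + ψ w p)
    {p w : U} {Ω : ℝ} (hΩ : 1 ≤ Ω) (hfirst : ∑ c with G.Adj w c ∧ c ≠ p, ψ w c ≤ t * Ω) :
    ((pathBall G r p w).card : ℝ) ≤ Ω * ∑ i ∈ Finset.range (r + 1), t ^ i := by
  induction r generalizing p w Ω with
  | zero => simpa [pathBall_zero] using hΩ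
  | succ r ih =>
    set σ := ∑ i ∈ Finset.range (r + 1), t ^ i with hσ
    have : 0 ≤ σ := Finset.sum_nonneg fun i _ => pow_nonneg ht i
    have hcard : ((pathBall G (r + 1) p w).card : ℝ) ≤
        ∑ c with G.Adj w c ∧ c ≠ p, ((pathBall G r w c).card : ℝ) + 1 := by
      exact_mod_cast (Finset.card_le_card (pathBall_succ_subset p w)).trans
        ((Finset.card_insert_le _ _).trans (Nat.add_le_add_right Finset.card_biUnion_le 1))
    have hbranch : ∀ c ∈ ({c | G.Adj w c ∧ c ≠ p} : Finset U),
        ((pathBall G r w c).card : ℝ) ≤ ψ w c * σ := fun c hc => by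
      have hwc := (Finset.mem_filter.1 hc).2.1
      refine ih (hψ w c) ?_
      rw [sum_adj_ne _ hwc, sub_le_iff_le_add]
      exact hstep w c hwc
    calc ((pathBall G (r + 1) p w).card : ℝ)
        ≤ (∑ c with G.Adj w c ∧ c ≠ p, ψ w c) * σ + 1 := by
          rw [Finset.sum_mul]
          grw [hcard, Finset.sum_le_sum hbranch]
      _ ≤ t * Ω * σ + Ω := by gcongr
      _ = Ω * ∑ i ∈ Finset.range (r + 1 + 1), t ^ i := by
          rw [geom_sum_succ, ← hσ]
          ring

lemma card_ball_le {ψ : U → U → ℝ} {t Ω : ℝ} (ht : 0 ≤ t) (hψ : ∀ p w, 1 ≤ ψ p w)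
    (hstep : ∀ p w, G.Adj p w → ∑ c with G.Adj w c, ψ w c ≤ t * ψ p w + ψ w p)
    (hΩ : 1 ≤ Ω) (hfirst : ∀ w, ∑ c with G.Adj w c, ψ w c ≤ t * Ω) (u : U) :
    (({w | G.edist u w ≤ r} : Finset U).card : ℝ) ≤ Ω * ∑ i ∈ Finset.range (r + 1), t ^ i := by
  have hsubset : ({w | G.edist u w ≤ r} : Finset U) ⊆ pathBall G r u u := fun w hw => by
    have hdist : G.edist u w ≤ r := (Finset.mem_filter.1 hw).2
    obtain ⟨q, hq⟩ := SimpleGraph.exists_walk_of_edist_ne_top (ne_top_of_le_ne_top (by simp) hdist)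
    have hnodup := q.bypass_isPath.support_nodup
    rw [← SimpleGraph.Walk.cons_tail_support, List.nodup_cons] at hnodup
    have hlength : q.length ≤ r := by exact_mod_cast hq.trans_le hdist
    exact Finset.mem_filter.2 ⟨Finset.mem_univ w, q.bypass, q.bypass_isPath,
      q.length_bypass_le_length.trans hlength, hnodup.1⟩
  refine (Nat.cast_le.2 (Finset.card_le_card hsubset)).trans
    (card_pathBall_le ht hψ hstep hΩ
      ((Finset.sum_le_sum_of_subset_of_nonneg ?_ ?_).trans (hfirst u)))
  · exact Finset.monotone_filter_right _ fun c _ hc => hc.1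
  · exact fun c _ _ => zero_le_one.trans (hψ u c)

lemma card_ball_le_of_degree_le [G.LocallyFinite] {k : ℕ} (hk : 1 ≤ k)
    (hG : ∀ w, G.degree w ≤ k + 1) (u : U) :
    ({w | G.edist u w ≤ r} : Finset U).card ≤ 2 * ∑ i ∈ Finset.range (r + 1), k ^ i := by
  have hdegree (w : U) : ∑ c with G.Adj w c, (1 : ℝ) ≤ k + 1 := by
    have hfilter : ({c | G.Adj w c} : Finset U) = G.neighborFinset w := by
      ext c
      simp
    rw [Finset.sum_const, nsmul_one, hfilter]
    exact_mod_cast hG w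
  have hk' : (1 : ℝ) ≤ k := by exact_mod_cast hk
  exact_mod_cast card_ball_le (r := r) (ψ := fun _ _ => 1) (t := k) (Ω := 2) (by positivity)
    (fun _ _ => le_rfl) (fun _ w _ => by simpa using hdegree w) one_le_two
    (fun w => (hdegree w).trans (by linarith)) u

end Balls

section TypeDegree

variable {U T : Type*} {G H : SimpleGraph U}

lemma degree_sup (h : Disjoint G H) (v : U) [Fintype (G.neighborSet v)]
    [Fintype (H.neighborSet v)] [Fintype ((G ⊔ H).neighborSet v)] :
    (G ⊔ H).degree v = G.degree v + H.degree v := by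
  simp only [← SimpleGraph.card_neighborFinset_eq_degree]
  rw [← Finset.card_union_of_disjoint]
  · congr 1
    ext w
    simp
  · refine Finset.disjoint_left.2 fun w hG hH => ?_
    rw [SimpleGraph.mem_neighborFinset] at hG hH
    exact SimpleGraph.disjoint_left.1 h v w hG hH

variable [Fintype U] [DecidableEq T] {τ : U → T} {u v w x y : U} {b : T}

/-- The number of neighbours of `v` in `G` that have type `b`. -/
def typeDegree (G : SimpleGraph U) (τ : U → T) (v : U) (b : T) : ℕ :=
  ({w | G.Adj v w ∧ τ w = b} : Finset U).card

lemma typeDegree_pos_of_adj (h : G.Adj v w) : 0 < typeDegree G τ v (τ w) :=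
  Finset.card_pos.2 ⟨w, by simpa using h⟩

lemma exists_adj_of_typeDegree_pos (h : 0 < typeDegree G τ v b) : ∃ w, G.Adj v w ∧ τ w = b :=
  let ⟨w, hw⟩ := Finset.card_pos.1 h
  ⟨w, by simpa using hw⟩

lemma typeDegree_bot (τ : U → T) (v : U) (b : T) : typeDegree ⊥ τ v b = 0 := by
  simp [typeDegree]

lemma sum_adj_eq_sum_typeDegree_mul [Fintype T] (G : SimpleGraph U) (τ : U → T) (v : U)
    (h : T → ℝ) : ∑ w with G.Adj v w, h (τ w) = ∑ b, typeDegree G τ v b * h b := by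
  rw [← Finset.sum_fiberwise_of_maps_to (t := Finset.univ) (g := τ) fun _ _ => Finset.mem_univ _]
  refine Finset.sum_congr rfl fun b _ => ?_
  rw [typeDegree, ← nsmul_eq_mul, ← Finset.sum_const, Finset.filter_filter]
  exact Finset.sum_congr rfl fun w hw => by rw [(Finset.mem_filter.1 hw).2.2]

lemma degree_eq_sum_typeDegree [Fintype T] (G : SimpleGraph U) (τ : U → T) (v : U)
    [Fintype (G.neighborSet v)] : G.degree v = ∑ b, typeDegree G τ v b := by
  have hfilter : G.neighborFinset v = ({w | G.Adj v w} : Finset U) := by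
    ext w
    simp
  rw [← SimpleGraph.card_neighborFinset_eq_degree, hfilter,
    Finset.card_eq_sum_card_fiberwise (f := τ) (t := Finset.univ) (by simp)]
  simp [typeDegree, Finset.filter_filter]

lemma sum_typeDegree_comm (G : SimpleGraph U) (τ : U → T) (a b : T) :
    ∑ v with τ v = a, typeDegree G τ v b = ∑ v with τ v = b, typeDegree G τ v a := by
  convert Finset.sum_card_bipartiteAbove_eq_sum_card_bipartiteBelow (s := {v | τ v = a})
    (t := {v | τ v = b}) G.Adj using 3
  · simp [Finset.bipartiteAbove, Finset.filter_filter, and_comm, typeDegree]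
  · simp [Finset.bipartiteBelow, Finset.filter_filter, and_comm, typeDegree, G.adj_comm]

lemma typeDegree_sup (h : Disjoint G H) (τ : U → T) (v : U) (b : T) :
    typeDegree (G ⊔ H) τ v b = typeDegree G τ v b + typeDegree H τ v b := by
  rw [typeDegree, typeDegree, typeDegree, ← Finset.card_union_of_disjoint]
  · congr 1
    ext w
    simp [or_and_right]
  · refine Finset.disjoint_filter.2 fun w _ hG hH => ?_
    exact SimpleGraph.disjoint_left.1 h v w hG.1 hH.1

lemma typeDegree_edge (huv : u ≠ v) (τ : U → T) (w : U) (b : T) :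
    typeDegree (SimpleGraph.edge u v) τ w b =
      (if w = u ∧ τ v = b then 1 else 0) + if w = v ∧ τ u = b then 1 else 0 := by
  calc typeDegree (SimpleGraph.edge u v) τ w b
    _ = ∑ z, ((if z = v then if w = u ∧ τ v = b then 1 else 0 else 0) +
          if z = u then if w = v ∧ τ u = b then 1 else 0 else 0) := by
      rw [typeDegree, Finset.card_filter]
      refine Finset.sum_congr rfl fun z _ => ?_
      simp only [SimpleGraph.edge_adj]
      grind
    _ = _ := by
      simp only [Finset.sum_add_distrib, Finset.sum_ite_eq', Finset.mem_univ, if_true]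

lemma typeDegree_sup_edge (huv : u ≠ v) (hG : ¬ G.Adj u v) (τ : U → T) (w : U) (b : T) :
    typeDegree (G ⊔ SimpleGraph.edge u v) τ w b = typeDegree G τ w b +
      ((if w = u ∧ τ v = b then 1 else 0) + if w = v ∧ τ u = b then 1 else 0) := by
  rw [typeDegree_sup (G.disjoint_edge.2 hG), typeDegree_edge huv]

lemma typeDegree_deleteEdges_add (hxy : G.Adj x y) (τ : U → T) (w : U) (b : T) :
    typeDegree (G.deleteEdges {s(x, y)}) τ w b +
      ((if w = x ∧ τ y = b then 1 else 0) + if w = y ∧ τ x = b then 1 else 0) =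
      typeDegree G τ w b := by
  have hsup : G.deleteEdges {s(x, y)} ⊔ SimpleGraph.edge x y = G := by
    rw [SimpleGraph.edge, SimpleGraph.deleteEdges, sdiff_sup_cancel (by simp [hxy])]
  rw [← typeDegree_sup_edge hxy.ne (by simp), hsup]

end TypeDegree

section Completion

variable {U T : Type*} [Fintype U] [DecidableEq T] {F H H' : SimpleGraph U} {τ : U → T}
  {c : U → T → ℕ} {g : ℕ} {u v x y : U}

/-- `H` is a partial solution of the problem of adding to `F` a graph in which every vertex `v` has
exactly `c v b` neighbours of type `b`, without creating cycles shorter than `g`. -/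
structure IsPartialCompletion (F : SimpleGraph U) (τ : U → T) (c : U → T → ℕ) (g : ℕ)
    (H : SimpleGraph U) : Prop where
  le_egirth : g ≤ (F ⊔ H).egirth
  typeDegree_le : ∀ v b, typeDegree H τ v b ≤ c v b

namespace IsPartialCompletion

lemma pos_of_adj (hH : IsPartialCompletion F τ c g H) (hxy : H.Adj x y) : 0 < c x (τ y) :=
  (typeDegree_pos_of_adj hxy).trans_le (hH.typeDegree_le _ _)

lemma disjoint (hH : IsPartialCompletion F τ c g H)
    (hF : ∀ v w, F.Adj v w → c v (τ w) = 0 ∨ c w (τ v) = 0) : Disjoint F H := by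
  refine SimpleGraph.disjoint_left.2 fun x y hFxy hxy => ?_
  have := hH.pos_of_adj hxy
  have := hH.pos_of_adj hxy.symm
  have := hF x y hFxy
  lia

lemma of_typeDegree_eq_add (hH : IsPartialCompletion F τ c g H) (huv : u ≠ v)
    (hu : typeDegree H τ u (τ v) < c u (τ v)) (hv : typeDegree H τ v (τ u) < c v (τ u))
    (hgirth : g ≤ (F ⊔ H').egirth)
    (hadd : ∀ w b, typeDegree H' τ w b = typeDegree H τ w b +
      ((if w = u ∧ τ v = b then 1 else 0) + if w = v ∧ τ u = b then 1 else 0)) :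
    IsPartialCompletion F τ c g H' ∧ typeDegree H τ < typeDegree H' τ := by
  refine ⟨⟨hgirth, fun w b => ?_⟩,
    Pi.lt_def.2 ⟨fun w b => ?_, u, Pi.lt_def.2 ⟨fun b => ?_, τ v, ?_⟩⟩⟩
  · have := hH.typeDegree_le w b
    by_cases hwu : w = u <;> grind
  all_goals simp [hadd]

lemma exists_lt_of_le_edist (hH : IsPartialCompletion F τ c g H) (hg : 2 ≤ g)
    (hu : typeDegree H τ u (τ v) < c u (τ v)) (hv : typeDegree H τ v (τ u) < c v (τ u))
    (huv : g ≤ (F ⊔ H).edist u v) :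
    ∃ H', IsPartialCompletion F τ c g H' ∧ typeDegree H τ < typeDegree H' τ := by
  obtain ⟨hadj, hne⟩ := not_adj_and_ne_of_two_le_edist (le_trans (mod_cast hg) huv)
  refine ⟨H ⊔ SimpleGraph.edge u v, hH.of_typeDegree_eq_add hne hu hv ?_
    (typeDegree_sup_edge hne (fun h => hadj (Or.inr h)) τ)⟩
  rw [← sup_assoc]
  exact le_egirth_sup_edge hH.le_egirth (huv.trans le_self_add)

lemma exists_lt_of_switch (hH : IsPartialCompletion F τ c g H) (hg : 2 ≤ g)
    (hF : ∀ v w, F.Adj v w → c v (τ w) = 0 ∨ c w (τ v) = 0) (hne : u ≠ v)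
    (hu : typeDegree H τ u (τ v) < c u (τ v)) (hv : typeDegree H τ v (τ u) < c v (τ u))
    (hxy : H.Adj x y) (hx : τ x = τ u) (hy : τ y = τ v)
    (hux : g < (F ⊔ H).edist u x) (hvx : g < (F ⊔ H).edist v x) :
    ∃ H', IsPartialCompletion F τ c g H' ∧ typeDegree H τ < typeDegree H' τ := by
  have huy : g ≤ (F ⊔ H).edist u y := by
    refine ENat.lt_add_one_iff' (ENat.natCast_ne_top g) |>.1 (hux.trans_le ?_)
    have hyx : (F ⊔ H).edist y x = 1 := SimpleGraph.edist_eq_one_iff_adj.2 (Or.inr hxy.symm)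
    simpa only [hyx] using SimpleGraph.edist_triangle (G := F ⊔ H) (u := u) (v := y) (w := x)
  have hg' : (2 : ℕ∞) ≤ g := mod_cast hg
  obtain ⟨hadj_uy, hne_uy⟩ := not_adj_and_ne_of_two_le_edist (hg'.trans huy)
  rw [SimpleGraph.edist_comm] at hux hvx
  obtain ⟨-, hne_xu⟩ := not_adj_and_ne_of_two_le_edist (hg'.trans hux.le)
  obtain ⟨hadj_xv, hne_xv⟩ := not_adj_and_ne_of_two_le_edist (hg'.trans hvx.le)
  refine ⟨H.deleteEdges {s(x, y)} ⊔ SimpleGraph.edge u y ⊔ SimpleGraph.edge x v,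
    hH.of_typeDegree_eq_add hne hu hv ?_ fun w b => ?_⟩
  · refine (le_egirth_switch hH.le_egirth (Or.inr hxy) (huy.trans le_self_add)
      (hux.le.trans le_self_add) (hvx.le.trans le_self_add)).trans (SimpleGraph.egirth_anti ?_)
    rw [SimpleGraph.deleteEdges_sup, (SimpleGraph.deleteEdges_eq_self (G := F)).2, sup_assoc,
      sup_assoc, sup_assoc]
    simpa using fun h => SimpleGraph.disjoint_left.1 (hH.disjoint hF) x y h hxy
  · rw [typeDegree_sup_edge, typeDegree_sup_edge, ← typeDegree_deleteEdges_add hxy, hx, hy]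
    · ring
    · exact hne_uy
    · exact fun h => hadj_uy (Or.inr (H.deleteEdges_le _ h))
    · exact hne_xv
    · simp only [SimpleGraph.sup_adj, SimpleGraph.edge_adj, not_or]
      exact ⟨fun h => hadj_xv (Or.inr (H.deleteEdges_le _ h)), by grind⟩

/-- The vertex `x` gains the missing edge at `v` if it lacks one itself, and otherwise gives up
one of its edges `xy`, which is replaced by `uy` and `xv`. -/
lemma exists_lt (hH : IsPartialCompletion F τ c g H) (hg : 2 ≤ g)
    (hF : ∀ v w, F.Adj v w → c v (τ w) = 0 ∨ c w (τ v) = 0) (hne : u ≠ v)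
    (hu : typeDegree H τ u (τ v) < c u (τ v)) (hv : typeDegree H τ v (τ u) < c v (τ u))
    (hx : τ x = τ u) (hcx : 0 < c x (τ v))
    (hux : g < (F ⊔ H).edist u x) (hvx : g < (F ⊔ H).edist v x) :
    ∃ H', IsPartialCompletion F τ c g H' ∧ typeDegree H τ < typeDegree H' τ := by
  rcases (hH.typeDegree_le x (τ v)).lt_or_eq with hdeg | hdeg
  · exact hH.exists_lt_of_le_edist hg hdeg (by rwa [hx]) (SimpleGraph.edist_comm ▸ hvx.le)
  · obtain ⟨y, hxy, hy⟩ := exists_adj_of_typeDegree_pos (hdeg ▸ hcx)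
    exact hH.exists_lt_of_switch hg hF hne hu hv hxy hx hy hux hvx

lemma exists_deficient (hH : IsPartialCompletion F τ c g H)
    (hc : ∀ a b, ∑ v with τ v = a, c v b = ∑ v with τ v = b, c v a) {b : T}
    (hu : typeDegree H τ u b < c u b) :
    ∃ v, τ v = b ∧ typeDegree H τ v (τ u) < c v (τ u) := by
  have hlt : ∑ v with τ v = b, typeDegree H τ v (τ u) < ∑ v with τ v = b, c v (τ u) := by
    rw [← hc, ← sum_typeDegree_comm]
    exact Finset.sum_lt_sum (fun v _ => hH.typeDegree_le v b) ⟨u, by simp, hu⟩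
  obtain ⟨v, hv, hlt⟩ := Finset.exists_lt_of_sum_lt hlt
  exact ⟨v, (Finset.mem_filter.1 hv).2, hlt⟩

end IsPartialCompletion

theorem exists_completion (hg : 2 ≤ g)
    (hF : ∀ v w, F.Adj v w → c v (τ w) = 0 ∨ c w (τ v) = 0) (hgF : g ≤ F.egirth)
    (hself : ∀ v, c v (τ v) = 0)
    (hc : ∀ a b, ∑ v with τ v = a, c v b = ∑ v with τ v = b, c v a)
    (hball : ∀ H, IsPartialCompletion F τ c g H → ∀ u w b, 0 < c u b →
      2 * ({z | (F ⊔ H).edist w z ≤ g} : Finset U).card <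
        ({x | τ x = τ u ∧ 0 < c x b} : Finset U).card) :
    ∃ H, IsPartialCompletion F τ c g H ∧ ∀ v b, typeDegree H τ v b = c v b := by
  have hbot : IsPartialCompletion F τ c g ⊥ := ⟨by simpa using hgF, by simp [typeDegree_bot]⟩
  obtain ⟨H, hH, hmax⟩ := Set.Finite.exists_maximalFor (fun H => typeDegree H τ)
    {H | IsPartialCompletion F τ c g H} (Set.toFinite _) ⟨⊥, hbot⟩
  refine ⟨H, hH, fun u b => (hH.typeDegree_le u b).antisymm (not_lt.1 fun hu => ?_)⟩
  obtain ⟨v, rfl, hv⟩ := hH.exists_deficient hc hu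
  have hne : u ≠ v := by
    rintro rfl
    simp [hself] at hu
  obtain ⟨x, hx, hfar⟩ : ∃ x ∈ ({x | τ x = τ u ∧ 0 < c x (τ v)} : Finset U),
      x ∉ ({z | (F ⊔ H).edist u z ≤ g} : Finset U) ∪ ({z | (F ⊔ H).edist v z ≤ g} : Finset U) := by
    refine Finset.exists_mem_notMem_of_card_lt_card ((Finset.card_union_le _ _).trans_lt ?_)
    have hballu := hball H hH u u (τ v) (by lia)
    have hballv := hball H hH u v (τ v) (by lia)
    lia
  simp only [Finset.mem_union, Finset.mem_filter_univ, not_or, not_le] at hx hfar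
  obtain ⟨H', hH', hlt⟩ := hH.exists_lt hg hF hne hu hv hx.1 hx.2 hfar.1 hfar.2
  exact hlt.not_ge (hmax hH' hlt.le)

end Completion

section Construction

variable {P : Type*} {B : SimpleGraph P} {e M K g : ℕ} {a t : ℝ}

/-- The vertices of the construction over a graph with vertex set `P`, in two copies that are told
apart by the first component: `M` support vertices for each position in `P` and each sign, then
`M * e` boundary vertices for each position, then `K` outer vertices. -/
abbrev Vertex (P : Type*) (e M K : ℕ) : Type _ :=
  Bool × ((P × Bool × Fin M) ⊕ (P × Fin M × Fin e) ⊕ Fin K)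

/-- The classes of the equitable partition: support vertices by position and sign, boundary vertices
by position, and the outer vertices as `none`. -/
abbrev VertexType (P : Type*) : Type _ := (P × Bool) ⊕ Option P

/-- The class of a vertex. -/
def vertexType : Vertex P e M K → VertexType P
  | (_, .inl (j, s, _)) => .inl (j, s)
  | (_, .inr (.inl (j, _))) => .inr (some j)
  | (_, .inr (.inr _)) => .inr none

/-- The degree matrix of a cover of two copies of `B`, in which every boundary vertex is joined to
one support vertex of either sign. -/
def supportDegree (B : SimpleGraph P) (e : ℕ) : VertexType P → VertexType P → ℕ
  | .inl (j, s), .inl (j', s') => if s' = s ∧ B.Adj j j' then 1 else 0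
  | .inl (j, _), .inr (some j') => if j' = j then e else 0
  | .inr (some j), .inl (j', _) => if j' = j then 1 else 0
  | _, _ => 0

/-- The number of edges that lead from a vertex to other boundary or outer vertices. -/
def outerDegree : Vertex P e M K → ℕ
  | (_, .inl _) => 0
  | (_, .inr (.inl _)) => e
  | (_, .inr (.inr _)) => e + 2

lemma supportDegree_self (x : VertexType P) : supportDegree B e x x = 0 := by
  rcases x with _ | _ | _ <;> simp [supportDegree]

lemma supportDegree_inr_inr (x y : Option P) : supportDegree B e (.inr x) (.inr y) = 0 := by
  rcases x with _ | _ <;> rfl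

/-- The number of edges from a vertex to boundary or outer vertices of side `i`, when these edges
are to form a bipartite graph between the two sides. -/
def sideDegree (v : Vertex P e M K) (i : Bool) : ℕ :=
  if i = v.1 then 0 else outerDegree v

lemma sum_sideDegree (v : Vertex P e M K) : ∑ i, sideDegree v i = outerDegree v := by
  rcases v with ⟨_ | _, v⟩ <;> simp [sideDegree]

/-- The weight of a directed edge in the count of non-backtracking paths in the support: `a`
inside the support, `t` from the boundary to the support, `1` from the support to the boundary. -/
def edgeWeight (a t : ℝ) : VertexType P → VertexType P → ℝ
  | .inl _, .inl _ => a
  | .inr _, .inl _ => t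
  | _, .inr _ => 1

lemma one_le_edgeWeight (ha : 1 ≤ a) (ht : 1 ≤ t) (x y : VertexType P) :
    1 ≤ edgeWeight a t x y := by
  rcases x with _ | _ <;> rcases y with _ | _ <;> simp [edgeWeight, ha, ht]

variable [Fintype P]

lemma card_vertexType_eq_inl (x : P × Bool) :
    ({v | vertexType v = .inl x} : Finset (Vertex P e M K)).card = 2 * M := by
  have : ({v | vertexType v = .inl x} : Finset (Vertex P e M K)) =
      Finset.univ.image fun z : Bool × Fin M => (z.1, .inl (x.1, x.2, z.2)) := by
    ext ⟨i, v | v | v⟩ <;> simp [vertexType, eq_comm, Prod.ext_iff]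
  rw [this, Finset.card_image_of_injective _ fun y z h => by simpa [Prod.ext_iff] using h]
  simp

lemma card_vertexType_eq_some (j : P) :
    ({v | vertexType v = .inr (some j)} : Finset (Vertex P e M K)).card = 2 * M * e := by
  have : ({v | vertexType v = .inr (some j)} : Finset (Vertex P e M K)) =
      Finset.univ.image fun z : Bool × Fin M × Fin e => (z.1, .inr (.inl (j, z.2))) := by
    ext ⟨i, v | v | v⟩ <;> simp [vertexType, eq_comm, Prod.ext_iff]
  rw [this, Finset.card_image_of_injective _ fun y z h => by simpa [Prod.ext_iff] using h]
  simp [mul_assoc]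

lemma sum_supportDegree_mul_inl (x : VertexType P) (h : P × Bool → ℝ) :
    ∑ y, (supportDegree B e x (.inl y) : ℝ) * h y =
      match x with
      | .inl (j, s) => ∑ j' with B.Adj j j', h (j', s)
      | .inr (some j) => h (j, true) + h (j, false)
      | .inr none => 0 := by
  rcases x with ⟨j, s⟩ | _ | j
  · cases s <;> simp [supportDegree, Fintype.sum_prod_type, Finset.sum_filter]
  all_goals simp [supportDegree, Fintype.sum_prod_type, Finset.sum_add_distrib]

lemma sum_supportDegree_mul (x : VertexType P) (h : VertexType P → ℝ) :
    ∑ y, (supportDegree B e x y : ℝ) * h y =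
      match x with
      | .inl (j, s) => ∑ j' with B.Adj j j', h (.inl (j', s)) + e * h (.inr (some j))
      | .inr (some j) => h (.inl (j, true)) + h (.inl (j, false))
      | .inr none => 0 := by
  rw [Fintype.sum_sum_type, sum_supportDegree_mul_inl x fun y => h (.inl y)]
  rcases x with _ | _ | _ <;> simp [supportDegree]

lemma sum_supportDegree_comm (x y : VertexType P) :
    ∑ v : Vertex P e M K with vertexType v = x, supportDegree B e (vertexType v) y =
      ∑ v : Vertex P e M K with vertexType v = y, supportDegree B e (vertexType v) x := by
  have hclass (x y : VertexType P) :
      ∑ v : Vertex P e M K with vertexType v = x, supportDegree B e (vertexType v) y =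
        ({v | vertexType v = x} : Finset (Vertex P e M K)).card * supportDegree B e x y :=
    Finset.sum_const_nat fun v hv => by rw [(Finset.mem_filter.1 hv).2]
  rw [hclass, hclass]
  rcases x with ⟨j, s⟩ | _ | j <;> rcases y with ⟨j', s'⟩ | _ | j' <;>
    simp only [card_vertexType_eq_inl, card_vertexType_eq_some, supportDegree, mul_zero]
  · simp only [B.adj_comm j, eq_comm (a := s')]
  all_goals grind

lemma sum_supportDegree_mul_edgeWeight_le (hB : ∀ j, B.degree j ≤ 2) (ha : 0 ≤ a)
    (ht : 0 ≤ t) (x : VertexType P) :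
    ∑ y, (supportDegree B e x y : ℝ) * edgeWeight a t x y ≤
      match x with
      | .inl _ => 2 * a + e
      | .inr _ => 2 * t := by
  rw [sum_supportDegree_mul]
  rcases x with ⟨j, s⟩ | _ | j <;> simp only [edgeWeight]
  · have hj : ((B.degree j : ℕ) : ℝ) ≤ 2 := mod_cast hB j
    rw [Finset.sum_const, ← SimpleGraph.neighborFinset_eq_filter,
      SimpleGraph.card_neighborFinset_eq_degree, nsmul_eq_mul, mul_one]
    gcongr
  · positivity
  · rw [two_mul]

lemma card_ball_le_of_typeDegree_le_supportDegree (hB : ∀ j, B.degree j ≤ 2) (ha : 1 ≤ a)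
    (ht : 1 ≤ t) (h₁ : a + e ≤ t * a) (h₂ : 2 * a + e ≤ t ^ 2 + 1)
    {G : SimpleGraph (Vertex P e M K)}
    (hG : ∀ v y, typeDegree G vertexType v y ≤ supportDegree B e (vertexType v) y) (r : ℕ)
    (u : Vertex P e M K) : (({w | G.edist u w ≤ r} : Finset _).card : ℝ) ≤
      (a + t) * ∑ i ∈ Finset.range (r + 1), t ^ i := by
  have hsum (w : Vertex P e M K) :
      ∑ c with G.Adj w c, edgeWeight a t (vertexType w) (vertexType c) ≤
        ∑ y, (supportDegree B e (vertexType w) y : ℝ) * edgeWeight a t (vertexType w) y := by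
    rw [sum_adj_eq_sum_typeDegree_mul G vertexType w fun y => edgeWeight a t (vertexType w) y]
    gcongr with y
    · exact zero_le_one.trans (one_le_edgeWeight ha ht _ y)
    · exact hG w y
  refine card_ball_le (ψ := fun p w => edgeWeight a t (vertexType p) (vertexType w))
    (by linarith) (fun p w => one_le_edgeWeight ha ht _ _) (fun p w hpw => (hsum w).trans ?_)
    (by linarith) (fun w => (hsum w).trans ?_) u
  · have hpos : 0 < supportDegree B e (vertexType w) (vertexType p) :=
      (typeDegree_pos_of_adj hpw.symm).trans_le (hG w _)
    refine (sum_supportDegree_mul_edgeWeight_le hB (by linarith) (by linarith) _).trans ?_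
    rcases hw : vertexType w with x | x <;> rcases hp : vertexType p with y | y <;>
      simp only [edgeWeight]
    · linarith
    · linarith
    · linarith
    · simp [hw, hp, supportDegree_inr_inr] at hpos
  · refine (sum_supportDegree_mul_edgeWeight_le hB (by linarith) (by linarith) _).trans ?_
    rcases vertexType w with x | x <;> simp only <;> nlinarith

lemma two_mul_le_card_vertexType_eq {v : Vertex P e M K} (hv : vertexType v ≠ .inr none) :
    2 * M ≤ ({w | vertexType w = vertexType v} : Finset (Vertex P e M K)).card := by
  rcases v with ⟨i, v | ⟨j, x, y⟩ | v⟩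
  · exact (card_vertexType_eq_inl _).ge
  · refine le_of_le_of_eq ?_ (card_vertexType_eq_some j).symm
    exact Nat.le_mul_of_pos_right _ y.pos
  · exact (hv rfl).elim

lemma exists_typeDegree_eq_supportDegree (hB : ∀ j, B.degree j ≤ 2) (hg : 2 ≤ g) (ha : 1 ≤ a)
    (ht : 1 ≤ t) (h₁ : a + e ≤ t * a) (h₂ : 2 * a + e ≤ t ^ 2 + 1)
    (hM : (a + t) * ∑ i ∈ Finset.range (g + 1), t ^ i < M) :
    ∃ F : SimpleGraph (Vertex P e M K), g ≤ F.egirth ∧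
      ∀ v y, typeDegree F vertexType v y = supportDegree B e (vertexType v) y := by
  refine (exists_completion (F := ⊥) (c := fun v y => supportDegree B e (vertexType v) y) hg
    (by simp) (by simp) (fun v => supportDegree_self _)
    sum_supportDegree_comm fun H hH u w y hu => ?_).imp
    fun F hF => ⟨by simpa using hF.1.le_egirth, hF.2⟩
  have hball : ({z | H.edist w z ≤ g} : Finset (Vertex P e M K)).card < M := by
    exact_mod_cast (card_ball_le_of_typeDegree_le_supportDegree hB ha ht h₁ h₂
      hH.typeDegree_le g w).trans_lt hM
  have hclass : ({x | vertexType x = vertexType u ∧ 0 < supportDegree B e (vertexType x) y} :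
      Finset (Vertex P e M K)) = ({x | vertexType x = vertexType u} : Finset _) :=
    Finset.filter_congr fun x _ => and_iff_left_of_imp fun hx => by rwa [hx]
  have hlarge : 2 * M ≤ ({x | vertexType x = vertexType u} : Finset (Vertex P e M K)).card :=
    two_mul_le_card_vertexType_eq fun h => by simp [h, supportDegree] at hu
  rw [bot_sup_eq, hclass]
  lia

lemma degree_add_outerDegree (hB : ∀ j, B.degree j = 2) {F : SimpleGraph (Vertex P e M K)}
    (hF : ∀ v y, typeDegree F vertexType v y = supportDegree B e (vertexType v) y)
    (v : Vertex P e M K) : F.degree v + outerDegree v = e + 2 := by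
  have hsum : (F.degree v : ℝ) = ∑ y, (supportDegree B e (vertexType v) y : ℝ) * 1 := by
    simp [degree_eq_sum_typeDegree F vertexType, hF]
  rw [sum_supportDegree_mul] at hsum
  rcases v with ⟨i, ⟨j, s, x⟩ | ⟨j, x⟩ | x⟩ <;> simp only [vertexType, outerDegree] at hsum ⊢
  · rw [Finset.sum_const, ← SimpleGraph.neighborFinset_eq_filter,
      SimpleGraph.card_neighborFinset_eq_degree, hB, nsmul_one, mul_one] at hsum
    rw [add_zero, add_comm]
    exact_mod_cast hsum
  · rw [one_add_one_eq_two] at hsum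
    rw [add_comm]
    congr 1
    exact_mod_cast hsum
  · simpa using hsum

lemma sum_sideDegree_comm (i i' : Bool) :
    ∑ v : Vertex P e M K with v.1 = i, sideDegree v i' =
      ∑ v : Vertex P e M K with v.1 = i', sideDegree v i := by
  simp only [Finset.sum_filter, Fintype.sum_prod_type, Fintype.sum_bool, sideDegree]
  cases i <;> cases i' <;> simp [outerDegree]

lemma le_card_sideDegree_pos {u : Vertex P e M K} {i : Bool} (hu : 0 < sideDegree u i) :
    K ≤ ({x | x.1 = u.1 ∧ 0 < sideDegree x i} : Finset (Vertex P e M K)).card := by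
  calc K = (Finset.univ.image fun x : Fin K => ((u.1, .inr (.inr x)) : Vertex P e M K)).card := by
        rw [Finset.card_image_of_injective _ fun x y h => by simpa using h, Finset.card_fin]
    _ ≤ _ := Finset.card_le_card (Finset.image_subset_iff.2 fun x _ => by
        grind [sideDegree, outerDegree])

lemma outerDegree_eq_zero_or_of_adj {F : SimpleGraph (Vertex P e M K)}
    (hF : ∀ v y, typeDegree F vertexType v y = supportDegree B e (vertexType v) y)
    {v w : Vertex P e M K} (hvw : F.Adj v w) : outerDegree v = 0 ∨ outerDegree w = 0 := by
  have hpos := typeDegree_pos_of_adj (τ := vertexType) hvw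
  rw [hF] at hpos
  rcases v with ⟨i, v | v | v⟩ <;> rcases w with ⟨i', w | w | w⟩ <;>
    simp [vertexType, outerDegree, supportDegree_inr_inr] at hpos ⊢

lemma exists_sideDegree_completion (hB : ∀ j, B.degree j = 2) (hg : 2 ≤ g)
    (hK : 4 * ∑ i ∈ Finset.range (g + 1), (e + 1) ^ i < K) {F : SimpleGraph (Vertex P e M K)}
    (hgF : g ≤ F.egirth)
    (hF : ∀ v y, typeDegree F vertexType v y = supportDegree B e (vertexType v) y)
    (hsplit : ∀ v w, F.Adj v w → sideDegree v w.1 = 0 ∨ sideDegree w v.1 = 0) :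
    ∃ H, IsPartialCompletion F Prod.fst sideDegree g H ∧
      ∀ v i, typeDegree H Prod.fst v i = sideDegree v i := by
  refine exists_completion hg hsplit hgF (fun v => if_pos rfl)
    sum_sideDegree_comm fun H hH u w i hu => ?_
  have hball : ({z | (F ⊔ H).edist w z ≤ g} : Finset (Vertex P e M K)).card ≤
      2 * ∑ i ∈ Finset.range (g + 1), (e + 1) ^ i := by
    refine card_ball_le_of_degree_le (Nat.le_add_left 1 e) (fun v => ?_) w
    rw [degree_sup (hH.disjoint hsplit), degree_eq_sum_typeDegree H Prod.fst, add_assoc,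
      one_add_one_eq_two, ← degree_add_outerDegree hB hF v, ← sum_sideDegree]
    gcongr with i
    exact hH.typeDegree_le v i
  have hlarge := le_card_sideDegree_pos hu
  lia

lemma exists_regular_of_supportDegree (hB : ∀ j, B.degree j = 2) (hg : 2 ≤ g)
    (hK : 4 * ∑ i ∈ Finset.range (g + 1), (e + 1) ^ i < K) {F : SimpleGraph (Vertex P e M K)}
    (hgF : g ≤ F.egirth)
    (hF : ∀ v y, typeDegree F vertexType v y = supportDegree B e (vertexType v) y) :
    ∃ G : SimpleGraph (Vertex P e M K), g ≤ G.egirth ∧ (∀ v, G.degree v = e + 2) ∧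
      ∀ v x, typeDegree G vertexType v (.inl x) = supportDegree B e (vertexType v) (.inl x) := by
  have hsplit (v w : Vertex P e M K) (hvw : F.Adj v w) :
      sideDegree v w.1 = 0 ∨ sideDegree w v.1 = 0 := by
    have := outerDegree_eq_zero_or_of_adj hF hvw
    grind [sideDegree]
  obtain ⟨H, hH, hdeg⟩ := exists_sideDegree_completion hB hg hK hgF hF hsplit
  refine ⟨F ⊔ H, hH.le_egirth, fun v => ?_, fun v x => ?_⟩
  · simp only [degree_sup (hH.disjoint hsplit), degree_eq_sum_typeDegree H Prod.fst, hdeg,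
      sum_sideDegree, degree_add_outerDegree hB hF]
  · rw [typeDegree_sup (hH.disjoint hsplit), hF, Nat.add_eq_left]
    refine Nat.eq_zero_of_not_pos fun hpos => ?_
    obtain ⟨⟨i, w | w | w⟩, hvw, hw⟩ := exists_adj_of_typeDegree_pos hpos
    · simpa [sideDegree, outerDegree] using hH.pos_of_adj hvw.symm
    all_goals simp [vertexType] at hw

end Construction

section Eigenvectors

variable {U W : Type*} {G : SimpleGraph U} {H : SimpleGraph W}

lemma IsRegular.of_iso (φ : G ≃g H) {k : ℕ} (h : IsRegular G k) : IsRegular H k := by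
  intro v
  rw [← h (φ.symm v)]
  exact Set.ncard_congr' (φ.symm.mapNeighborSet v)

variable [Fintype U]

lemma adjMat_mulVec_apply (G : SimpleGraph U) (f : U → ℝ) (v : U) :
    (adjMat G).mulVec f v = ∑ w with G.Adj v w, f w := by
  let := Classical.decRel G.Adj
  unfold adjMat
  rw [SimpleGraph.adjMatrix_mulVec_apply]
  refine Finset.sum_congr ?_ fun _ _ => rfl
  ext w
  simp

lemma LocalizedSpectrum.mono {r : ℕ} {ε b b' : ℝ} (h : LocalizedSpectrum G r ε b) (hb : b ≤ b') :
    LocalizedSpectrum G r ε b' := by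
  obtain ⟨Λ, hΛ, h⟩ := h
  exact ⟨Λ, hΛ, fun μ hμ => (h μ hμ).imp fun k hk => ⟨hk.1.trans hb, hk.2⟩⟩

lemma hasLocalizedEigenvector_of_support {f : U → ℝ} {μ : ℝ} {S : Finset U} {ε : ℝ} (hε : ε ≤ 1)
    (hf : (adjMat G).mulVec f = μ • f) (h0 : f ≠ 0) (hS : ∀ x, x ∉ S → f x = 0) :
    HasLocalizedEigenvector G μ S.card ε := by
  obtain ⟨x, hx⟩ := Function.ne_iff.1 h0
  have hpos : 0 < ∑ x, f x ^ 2 :=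
    Finset.sum_pos' (fun _ _ => sq_nonneg _) ⟨x, Finset.mem_univ x, sq_pos_of_ne_zero hx⟩
  have hnorm : ∑ x, ((√(∑ x, f x ^ 2))⁻¹ • f) x ^ 2 = 1 := by
    simp only [Pi.smul_apply, smul_eq_mul, mul_pow, ← Finset.mul_sum, inv_pow, Real.sq_sqrt hpos.le]
    exact inv_mul_cancel₀ hpos.ne'
  refine ⟨_, ?_, hnorm, S, rfl, ?_⟩
  · rw [Matrix.mulVec_smul, hf, smul_comm]
  · rw [Finset.sum_subset (Finset.subset_univ S) fun x _ hx => by simp [hS x hx], hnorm]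
    exact hε

variable [Fintype W]

lemma HasLocalizedEigenvector.of_iso (φ : G ≃g H) {μ : ℝ} {k : ℕ} {ε : ℝ}
    (h : HasLocalizedEigenvector G μ k ε) : HasLocalizedEigenvector H μ k ε := by
  obtain ⟨f, hf, hnorm, S, hS, hε⟩ := h
  refine ⟨f ∘ φ.symm, ?_, ?_, S.map φ.toEquiv.toEmbedding, by simpa using hS, ?_⟩
  · ext v
    have hv := congrFun hf (φ.symm v)
    rw [adjMat_mulVec_apply] at hv ⊢
    rw [Pi.smul_apply, Function.comp_apply, ← Pi.smul_apply, ← hv]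
    refine Finset.sum_equiv φ.symm.toEquiv (fun w => ?_) fun w _ => rfl
    simpa using (φ.symm.map_adj_iff (v := v) (w := w)).symm
  · rw [← hnorm]
    exact Equiv.sum_comp φ.symm.toEquiv fun x => f x ^ 2
  · simpa using hε

lemma LocalizedSpectrum.of_iso (φ : G ≃g H) {r : ℕ} {ε b : ℝ} (h : LocalizedSpectrum G r ε b) :
    LocalizedSpectrum H r ε b := by
  obtain ⟨Λ, hΛ, h⟩ := h
  refine ⟨Λ, hΛ, fun μ hμ => ?_⟩
  obtain ⟨k, hk, h⟩ := h μ hμ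
  exact ⟨k, hk, h.of_iso φ⟩

end Eigenvectors

section Lift

variable {P : Type*} {B : SimpleGraph P} {e M K : ℕ} {f : P → ℝ} {μ : ℝ}

/-- The lift of a function on the positions to the support, with opposite values for the two signs
so that it cancels at the boundary. -/
def signedLift (f : P → ℝ) : VertexType P → ℝ
  | .inl (j, s) => (if s then 1 else -1) * f j
  | .inr _ => 0

variable [Fintype P]

lemma adjMat_mulVec_signedLift {G : SimpleGraph (Vertex P e M K)}
    (hG : ∀ v x, typeDegree G vertexType v (.inl x) = supportDegree B e (vertexType v) (.inl x))
    (hf : (adjMat B).mulVec f = μ • f) :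
    (adjMat G).mulVec (signedLift f ∘ vertexType) = μ • (signedLift f ∘ vertexType) := by
  ext v
  rw [adjMat_mulVec_apply]
  simp only [Function.comp_apply, Pi.smul_apply, smul_eq_mul]
  rw [sum_adj_eq_sum_typeDegree_mul G vertexType v (signedLift f), Fintype.sum_sum_type]
  simp only [hG, sum_supportDegree_mul_inl _ fun x => signedLift f (.inl x)]
  rcases vertexType v with ⟨j, s⟩ | _ | j
  · have hj := congrFun hf j
    rw [adjMat_mulVec_apply] at hj
    simp only [signedLift, ← Finset.mul_sum, hj]
    simp [mul_left_comm]
  all_goals simp [signedLift]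

/-- The support vertices. -/
def supportSet (P : Type*) [Fintype P] (e M K : ℕ) : Finset (Vertex P e M K) :=
  {v | ∃ x, vertexType v = .inl x}

lemma card_supportSet : (supportSet P e M K).card = 4 * Fintype.card P * M := by
  have : supportSet P e M K =
      Finset.univ.image fun z : Bool × P × Bool × Fin M => (z.1, .inl z.2) := by
    ext ⟨i, ⟨j, _ | _, v⟩ | v | v⟩ <;> simp [supportSet, vertexType]
  rw [this, Finset.card_image_of_injective _ fun y z h => by simpa [Prod.ext_iff] using h]
  simp only [Finset.card_univ, Fintype.card_prod, Fintype.card_bool, Fintype.card_fin]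
  ring

lemma localizedSpectrum_of_supportDegree (hM : 0 < M) {G : SimpleGraph (Vertex P e M K)}
    (hG : ∀ v x, typeDegree G vertexType v (.inl x) = supportDegree B e (vertexType v) (.inl x))
    {Λ : Finset ℝ} (hΛ : ∀ μ ∈ Λ, ∃ f, f ≠ 0 ∧ (adjMat B).mulVec f = μ • f) {ε : ℝ} (hε : ε ≤ 1) :
    LocalizedSpectrum G Λ.card ε (4 * Fintype.card P * M) := by
  refine ⟨Λ, rfl, fun μ hμ => ⟨4 * Fintype.card P * M, by norm_cast, ?_⟩⟩
  obtain ⟨f, hf, hμ⟩ := hΛ μ hμ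
  obtain ⟨j, hj⟩ := Function.ne_iff.1 hf
  rw [← card_supportSet (e := e) (K := K)]
  refine hasLocalizedEigenvector_of_support hε (adjMat_mulVec_signedLift hG hμ) ?_ ?_
  · exact Function.ne_iff.2 ⟨(true, .inl (j, true, ⟨0, hM⟩)), by simpa [signedLift, vertexType]⟩
  · rintro ⟨i, v | v | v⟩ hv
    · exact (hv (Finset.mem_filter.2 ⟨Finset.mem_univ _, _, rfl⟩)).elim
    all_goals rfl

end Lift

section Cycle

variable {n : ℕ}

lemma re_stdAddChar_add_sub [NeZero n] (k j : ZMod n) :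
    (ZMod.stdAddChar (k * (j - 1))).re + (ZMod.stdAddChar (k * (j + 1))).re =
      2 * (ZMod.stdAddChar k).re * (ZMod.stdAddChar (k * j)).re := by
  rw [mul_add, mul_sub, mul_one, sub_eq_add_neg, AddChar.map_add_eq_mul, AddChar.map_add_eq_mul,
    AddChar.map_neg_eq_conj]
  simp only [Complex.mul_re, Complex.conj_re, Complex.conj_im]
  ring

lemma re_stdAddChar_natCast [NeZero n] (k : ℕ) :
    (ZMod.stdAddChar (k : ZMod n)).re = Real.cos (2 * Real.pi * k / n) := by
  have h := ZMod.stdAddChar_coe (N := n) k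
  rw [Int.cast_natCast] at h
  rw [h, ← Complex.exp_ofReal_mul_I_re]
  congr 2
  push_cast
  ring

lemma adjMat_cycleGraph_mulVec (n : ℕ) (f : Fin (n + 3) → ℝ) (j : Fin (n + 3)) :
    (adjMat (SimpleGraph.cycleGraph (n + 3))).mulVec f j = f (j - 1) + f (j + 1) := by
  have hj : j - 1 ≠ j + 1 := by
    rw [← Finset.card_pair_eq_two_iff, ← SimpleGraph.cycleGraph_degree_two_le,
      SimpleGraph.cycleGraph_degree_three_le]
  rw [adjMat_mulVec_apply, ← Finset.sum_pair hj]
  congr 1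
  ext i
  simpa using Set.ext_iff.1 (SimpleGraph.cycleGraph_neighborSet (v := j)) i

lemma adjMat_cycleGraph_mulVec_re_stdAddChar (n : ℕ) (k : ZMod (n + 3)) :
    (adjMat (SimpleGraph.cycleGraph (n + 3))).mulVec
        (fun j => (ZMod.stdAddChar (k * ZMod.finEquiv _ j)).re) =
      (2 * (ZMod.stdAddChar k).re) • fun j => (ZMod.stdAddChar (k * ZMod.finEquiv _ j)).re := by
  ext j
  rw [adjMat_cycleGraph_mulVec, Pi.smul_apply, smul_eq_mul, ← re_stdAddChar_add_sub, map_sub,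
    map_add, map_one]

lemma injOn_cos_two_pi_mul_div {r : ℕ} (hr : 2 * r ≤ n) :
    Set.InjOn (fun k : ℕ => Real.cos (2 * Real.pi * k / n)) (Finset.range r) := by
  have hmem : ∀ k ∈ (Finset.range r : Set ℕ), 2 * Real.pi * k / n ∈ Set.Icc 0 Real.pi := by
    intro k hk
    have hk : (2 * k : ℝ) ≤ n := by
      have := Finset.mem_range.1 hk
      exact_mod_cast (by omega : 2 * k ≤ n)
    refine ⟨by positivity, div_le_of_le_mul₀ (by positivity) Real.pi_pos.le ?_⟩
    nlinarith [Real.pi_pos]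
  intro k hk l hl h
  have hn : (n : ℝ) ≠ 0 := by
    have := Finset.mem_range.1 hk
    exact_mod_cast (by omega : n ≠ 0)
  have := Real.injOn_cos (hmem k hk) (hmem l hl) h
  rw [div_left_inj' hn, mul_right_inj' (by positivity)] at this
  exact_mod_cast this

lemma exists_eigenvectors_cycleGraph (n : ℕ) {r : ℕ} (hr : 2 * r ≤ n + 3) :
    ∃ Λ : Finset ℝ, Λ.card = r ∧
      ∀ μ ∈ Λ, ∃ f, f ≠ 0 ∧ (adjMat (SimpleGraph.cycleGraph (n + 3))).mulVec f = μ • f := by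
  refine ⟨(Finset.range r).image fun k : ℕ => 2 * Real.cos (2 * Real.pi * k / (n + 3 : ℕ)), ?_, ?_⟩
  · rw [Finset.card_image_of_injOn, Finset.card_range]
    exact (mul_right_injective₀ two_ne_zero).comp_injOn (injOn_cos_two_pi_mul_div hr)
  · simp only [Finset.forall_mem_image, ← re_stdAddChar_natCast]
    exact fun k _ => ⟨_, Function.ne_iff.2 ⟨0, by simp⟩, adjMat_cycleGraph_mulVec_re_stdAddChar n k⟩

end Cycle

section Existence

variable {P : Type*} {B : SimpleGraph P} {e M K g : ℕ} {a t ε : ℝ}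

lemma isRegular_iff_forall_degree_eq {G : SimpleGraph P} [G.LocallyFinite] {k : ℕ} :
    IsRegular G k ↔ ∀ v, G.degree v = k :=
  forall_congr' fun v => by rw [← SimpleGraph.card_neighborSet_eq_degree, Set.fintypeCard_eq_ncard]

lemma le_girth_of_isRegular [Finite P] [Nonempty P] {G : SimpleGraph P}
    (hG : IsRegular G (e + 2)) (hg : g ≤ G.egirth) : g ≤ G.girth := by
  have := Fintype.ofFinite P
  have hcycle : ¬ G.IsAcyclic := not_isAcyclic_of_forall_two_le_degree fun v =>
    (isRegular_iff_forall_degree_eq.1 hG v).ge.trans' le_add_self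
  rwa [← Nat.cast_le (α := ℕ∞), SimpleGraph.girth,
    ENat.natCast_toNat (SimpleGraph.egirth_eq_top.not.2 hcycle)]

variable [Fintype P]

lemma card_vertex : Fintype.card (Vertex P e M K) = 2 * (Fintype.card P * M * (e + 2) + K) := by
  simp only [Fintype.card_prod, Fintype.card_sum, Fintype.card_bool, Fintype.card_fin]
  ring

lemma exists_isRegular_localizedSpectrum [Nonempty P] (hB : ∀ j, B.degree j = 2) (hg : 2 ≤ g)
    (ha : 1 ≤ a) (ht : 1 ≤ t) (h₁ : a + e ≤ t * a) (h₂ : 2 * a + e ≤ t ^ 2 + 1)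
    (hM : (a + t) * ∑ i ∈ Finset.range (g + 1), t ^ i < M)
    (hK : 4 * ∑ i ∈ Finset.range (g + 1), (e + 1) ^ i < K) {Λ : Finset ℝ}
    (hΛ : ∀ μ ∈ Λ, ∃ f, f ≠ 0 ∧ (adjMat B).mulVec f = μ • f) (hε : ε ≤ 1) :
    ∃ G : SimpleGraph (Vertex P e M K), IsRegular G (e + 2) ∧ g ≤ G.girth ∧
      LocalizedSpectrum G Λ.card ε (4 * Fintype.card P * M) := by
  have hM0 : 0 < M := by
    have : (0 : ℝ) < M := hM.trans_le' (by positivity)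
    exact_mod_cast this
  obtain ⟨j⟩ := ‹Nonempty P›
  have : Nonempty (Vertex P e M K) := ⟨true, .inl (j, true, ⟨0, hM0⟩)⟩
  obtain ⟨F, hgF, hF⟩ :=
    exists_typeDegree_eq_supportDegree (K := K) (fun j => (hB j).le) hg ha ht h₁ h₂ hM
  obtain ⟨G, hgG, hdeg, hG⟩ := exists_regular_of_supportDegree hB hg hK hgF hF
  have hreg := isRegular_iff_forall_degree_eq.2 hdeg
  exact ⟨G, hreg, le_girth_of_isRegular hreg hgG, localizedSpectrum_of_supportDegree hM0 hG hΛ hε⟩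

lemma exists_isRegular_fin_localizedSpectrum {n r : ℕ} (hr : 2 * r ≤ n + 3) (hg : 2 ≤ g)
    (ha : 1 ≤ a) (ht : 1 ≤ t) (h₁ : a + e ≤ t * a) (h₂ : 2 * a + e ≤ t ^ 2 + 1)
    (hM : (a + t) * ∑ i ∈ Finset.range (g + 1), t ^ i < M)
    (hK : 4 * ∑ i ∈ Finset.range (g + 1), (e + 1) ^ i < K) (hε : ε ≤ 1) :
    ∃ G : SimpleGraph (Fin (2 * ((n + 3) * M * (e + 2) + K))), IsRegular G (e + 2) ∧
      g ≤ G.girth ∧ LocalizedSpectrum G r ε (4 * (n + 3) * M) := by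
  obtain ⟨Λ, rfl, hΛ⟩ := exists_eigenvectors_cycleGraph n hr
  obtain ⟨G, hreg, hgirth, hspec⟩ := exists_isRegular_localizedSpectrum
    (fun j => by convert SimpleGraph.cycleGraph_degree_three_le (v := j)) hg ha ht h₁ h₂ hM hK hΛ hε
  let φ := SimpleGraph.Iso.map (Fintype.equivFinOfCardEq (by rw [card_vertex, Fintype.card_fin])) G
  refine ⟨_, hreg.of_iso φ, hgirth.trans_eq φ.girth_eq, ?_⟩
  simpa using hspec.of_iso φ

end Existence

section Parameters

open Filter

lemma exists_growth_rate {e : ℝ} (he : 1 ≤ e) : ∃ a t : ℝ, 1 ≤ a ∧ 1 < t ∧ t ^ 2 < 2 * e + 1 ∧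
    a + e ≤ t * a ∧ 2 * a + e ≤ t ^ 2 + 1 := by
  set s := √(2 * e + 1)
  have hsq : s ^ 2 = 2 * e + 1 := Real.sq_sqrt (by linarith)
  have hs : 1 < s := Real.lt_sqrt_of_sq_lt (by linarith)
  have hcont : Continuous fun t : ℝ => (t - 1) * (t ^ 2 - e + 1) := by fun_prop
  have hlt : 2 * e < (s - 1) * (s ^ 2 - e + 1) := by
    have he' : e = (s ^ 2 - 1) / 2 := by linarith
    rw [he']
    nlinarith [pow_pos (sub_pos.2 hs) 3]
  obtain ⟨t, ⟨hlt, ht⟩, hts : t < s⟩ :=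
    ((((hcont.tendsto s).eventually (lt_mem_nhds hlt)).and (lt_mem_nhds hs)).filter_mono
      nhdsWithin_le_nhds |>.and (self_mem_nhdsWithin (s := Set.Iio s))).exists
  have ht0 : 0 < t - 1 := by linarith
  have hsmall : t ^ 2 < 2 * e + 1 := by nlinarith
  refine ⟨e / (t - 1), t, ?_, ht, hsmall, le_of_eq ?_, ?_⟩
  · rw [one_le_div ht0]
    nlinarith [sq_nonneg e]
  · field_simp
    ring
  · have : 2 * e / (t - 1) ≤ t ^ 2 - e + 1 := (div_le_iff₀' ht0).2 hlt.le
    linarith [mul_div_assoc 2 e (t - 1)]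

variable {d t α : ℝ} {D : ℕ}

/-- The girth that suffices for a graph with fewer than `d ^ ((D + 1) / α)` vertices. -/
def girthBound (d : ℝ) (D : ℕ) : ℕ :=
  ⌈2 * (D + 1) * Real.logb (2 * d - 1) d⌉₊

lemma one_le_two_mul_logb (hd : 1 < d) : 1 ≤ 2 * Real.logb (2 * d - 1) d := by
  have : Real.logb (2 * d - 1) (d ^ 2) = 2 * Real.logb (2 * d - 1) d := Real.logb_pow ..
  rw [← this, Real.le_logb_iff_rpow_le (by linarith) (by positivity), Real.rpow_one]
  nlinarith [sq_nonneg (d - 1)]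

lemma rpow_two_mul_logb_lt (hd : 1 < d) (ht : 0 ≤ t) (htd : t ^ 2 < 2 * d - 1) :
    t ^ (2 * Real.logb (2 * d - 1) d) < d := by
  rw [Real.rpow_mul ht, Real.rpow_two]
  exact (Real.rpow_lt_rpow (by positivity) htd (by linarith [one_le_two_mul_logb hd])).trans_eq
    (Real.rpow_logb (by linarith) (by linarith) (by linarith))

lemma two_mul_logb_lt_inv (hd : 1 < d) (hα : 0 < α) (hαd : d ^ (2 * α) < 2 * d - 1) :
    2 * Real.logb (2 * d - 1) d < α⁻¹ := by
  have : Real.logb (2 * d - 1) (d ^ (2 * α)) < 1 :=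
    (Real.logb_lt_iff_lt_rpow (by linarith) (by positivity)).2 (by rwa [Real.rpow_one])
  rw [Real.logb_rpow_eq_mul_logb_of_pos (by linarith)] at this
  rw [← one_div, lt_div_iff₀ hα]
  linarith

lemma succ_le_girthBound (hd : 1 < d) : D + 1 ≤ girthBound d D := by
  have : (D + 1 : ℝ) ≤ 2 * (D + 1) * Real.logb (2 * d - 1) d := by
    nlinarith [one_le_two_mul_logb hd]
  rw [← Nat.cast_le (α := ℝ)]
  push_cast
  exact this.trans (Nat.le_ceil _)

lemma sum_range_ceil_pow_le (ht : 1 < t) {x : ℝ} (hx : 0 ≤ x) :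
    ∑ i ∈ Finset.range (⌈x⌉₊ + 1), t ^ i ≤ t ^ (x + 2) / (t - 1) := by
  rw [geom_sum_eq ht.ne', ← Real.rpow_natCast]
  have : t ^ ((⌈x⌉₊ + 1 : ℕ) : ℝ) ≤ t ^ (x + 2) :=
    Real.rpow_le_rpow_of_exponent_le ht.le (by push_cast; linarith [Nat.ceil_lt_add_one hx])
  gcongr
  linarith

lemma eventually_linear_mul_pow_le {s : ℝ} (hs : 0 ≤ s) (hsd : s < d) (c : ℝ) :
    ∀ᶠ D : ℕ in atTop, c * (2 * D + 3) * s ^ D ≤ d ^ D := by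
  have ho (k : ℕ) : (fun D : ℕ => (D : ℝ) ^ k * s ^ D) =o[atTop] fun D : ℕ => d ^ D :=
    isLittleO_pow_const_mul_const_pow_const_pow_of_norm_lt k (by rwa [Real.norm_of_nonneg hs])
  filter_upwards [((((ho 1).const_mul_left 2).add ((ho 0).const_mul_left 3)).const_mul_left c).bound
    one_pos] with D hD
  rw [one_mul, Real.norm_of_nonneg (pow_nonneg (hs.trans hsd.le) D)] at hD
  calc c * (2 * D + 3) * s ^ D = c * (2 * ((D : ℝ) ^ 1 * s ^ D) + 3 * ((D : ℝ) ^ 0 * s ^ D)) := by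
        ring
    _ ≤ d ^ D := (Real.le_norm_self _).trans hD

/-- The balls have volume about `t ^ girthBound d D`, where `t ^ 2 < 2 * d - 1` makes this
exponentially smaller than `d ^ D`. -/
lemma eventually_exists_supportSize (hd : 1 < d) (ht : 1 < t) (htd : t ^ 2 < 2 * d - 1) {b c : ℝ}
    (hb : 0 ≤ b) (hc : 0 ≤ c) :
    ∀ᶠ D : ℕ in atTop, ∃ M : ℕ, b * ∑ i ∈ Finset.range (girthBound d D + 1), t ^ i < M ∧
      c * (2 * D + 3) * M ≤ d ^ D := by
  have hρ := one_le_two_mul_logb hd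
  set ρ := Real.logb (2 * d - 1) d
  have ht0 : 0 < t := by linarith
  have hs : 1 ≤ t ^ (2 * ρ) := Real.one_le_rpow ht.le (by linarith)
  set C := b * (t ^ (2 * ρ + 2) / (t - 1)) with hC
  filter_upwards [eventually_linear_mul_pow_le (by positivity) (rpow_two_mul_logb_lt hd ht0.le htd)
    (c * (C + 1))] with D hD
  set y := b * ∑ i ∈ Finset.range (girthBound d D + 1), t ^ i
  have hy : y ≤ C * (t ^ (2 * ρ)) ^ D := by
    have hexp : t ^ (2 * (D + 1) * ρ + 2) = t ^ (2 * ρ + 2) * (t ^ (2 * ρ)) ^ D := by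
      rw [← Real.rpow_mul_natCast ht0.le, ← Real.rpow_add ht0]
      ring_nf
    rw [hC, mul_assoc, div_mul_eq_mul_div, ← hexp]
    exact mul_le_mul_of_nonneg_left (sum_range_ceil_pow_le ht (by nlinarith)) hb
  refine ⟨⌊y⌋₊ + 1, by exact_mod_cast Nat.lt_floor_add_one y, ?_⟩
  calc c * (2 * D + 3) * (⌊y⌋₊ + 1 : ℕ) ≤ c * (2 * D + 3) * ((C + 1) * (t ^ (2 * ρ)) ^ D) := by
        gcongr
        push_cast
        linarith [Nat.floor_le (show 0 ≤ y by positivity), one_le_pow₀ hs (n := D)]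
    _ = c * (C + 1) * (2 * D + 3) * (t ^ (2 * ρ)) ^ D := by ring
    _ ≤ d ^ D := hD

lemma eventually_pow_girthBound_le (hd : 1 < d) (hα : 0 < α) (hαd : d ^ (2 * α) < 2 * d - 1)
    (c : ℕ) : ∀ᶠ D : ℕ in atTop, d ^ (girthBound d D + c) ≤ d ^ (D / α) := by
  have hρ := one_le_two_mul_logb hd
  have hρα := two_mul_logb_lt_inv hd hα hαd
  set ρ := Real.logb (2 * d - 1) d
  filter_upwards [tendsto_natCast_atTop_atTop.eventually_ge_atTop
    ((2 * ρ + 1 + c) / (α⁻¹ - 2 * ρ))] with D hD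
  rw [div_le_iff₀ (by linarith)] at hD
  have hceil : (girthBound d D : ℝ) < 2 * (D + 1) * ρ + 1 :=
    Nat.ceil_lt_add_one (by nlinarith [Nat.cast_nonneg (α := ℝ) D])
  rw [← Real.rpow_natCast, div_eq_mul_inv]
  refine Real.rpow_le_rpow_of_exponent_le hd.le ?_
  push_cast
  linarith

lemma add_two_mul_ceil_mem_Ico (hd : 2 ≤ d) (hα : 0 < α) (hαd : d ^ (2 * α) < 2 * d - 1) {S : ℝ}
    (hS : 0 ≤ S) (hSX : S + 2 ≤ d ^ (D / α)) :
    S + 2 * ⌈d ^ (D / α) / 2⌉₊ ∈ Set.Ico (d ^ (D / α)) (d ^ ((D + 1) / α)) := by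
  have hdouble : 2 * d ^ (D / α) ≤ d ^ ((D + 1) / α) := by
    rw [add_div, Real.rpow_add (by linarith), mul_comm]
    gcongr
    refine hd.trans (Real.self_le_rpow_of_one_le (by linarith) ?_)
    linarith [one_le_two_mul_logb (d := d) (by linarith), one_div α,
      two_mul_logb_lt_inv (by linarith) hα hαd]
  have hle := Nat.le_ceil (d ^ (D / α) / 2)
  have hlt := Nat.ceil_lt_add_one (show 0 ≤ d ^ (D / α) / 2 by positivity)
  constructor <;> linarith

lemma eight_mul_sum_range_pow_lt {d : ℕ} (hd : 2 ≤ d) (g : ℕ) :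
    8 * ∑ i ∈ Finset.range (g + 1), d ^ i < d ^ (g + 4) :=
  calc 8 * ∑ i ∈ Finset.range (g + 1), d ^ i < 8 * d ^ (g + 1) :=
        Nat.mul_lt_mul_of_pos_left (Nat.geomSum_lt hd fun i hi => Finset.mem_range.1 hi) (by simp)
    _ ≤ d ^ 3 * d ^ (g + 1) := Nat.mul_le_mul_right _ (Nat.pow_le_pow_left hd 3)
    _ = d ^ (g + 4) := by ring

lemma exists_outerSize {d : ℕ} (hd : 2 ≤ d) (hα : 0 < α) (hαd : (d : ℝ) ^ (2 * α) < 2 * d - 1)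
    (hD : (d : ℝ) ^ (girthBound d D + 4) ≤ d ^ (D / α)) {S : ℝ} (hS : 0 ≤ S) (hSD : S ≤ d ^ D) :
    ∃ K : ℕ, 4 * ∑ i ∈ Finset.range (girthBound d D + 1), d ^ i < K ∧
      S + 2 * K ∈ Set.Ico ((d : ℝ) ^ (D / α)) (d ^ ((D + 1) / α)) := by
  have hd' : (2 : ℝ) ≤ d := by exact_mod_cast hd
  refine ⟨⌈(d : ℝ) ^ (D / α) / 2⌉₊, ?_, add_two_mul_ceil_mem_Ico hd' hα hαd hS ?_⟩
  · have hsum := eight_mul_sum_range_pow_lt hd (girthBound d D)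
    have hsum : (8 * ∑ i ∈ Finset.range (girthBound d D + 1), d ^ i : ℕ) < (d : ℝ) ^ (D / α) :=
      hD.trans_lt' (by exact_mod_cast hsum)
    rw [Nat.lt_ceil, lt_div_iff₀ two_pos]
    refine hsum.trans_eq' ?_
    push_cast
    ring
  · calc S + 2 ≤ d ^ D + (d : ℝ) ^ D * 2 := by
          linarith [one_le_pow₀ (show (1 : ℝ) ≤ d by linarith) (n := D)]
      _ ≤ (d : ℝ) ^ D * d ^ 2 := by
          have : (3 : ℝ) ≤ d ^ 2 := by nlinarith
          linarith [mul_le_mul_of_nonneg_left this (show (0 : ℝ) ≤ d ^ D by positivity)]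
      _ = (d : ℝ) ^ (D + 2) := (pow_add ..).symm
      _ ≤ (d : ℝ) ^ (girthBound d D + 4) := by
          have := succ_le_girthBound (D := D) (show (1 : ℝ) < d by linarith)
          exact pow_le_pow_right₀ (by linarith) (by omega)
      _ ≤ d ^ (D / α) := hD

lemma floor_mul_logb_eq (hd : 1 < d) (hα : 0 < α) {x : ℝ}
    (hx : x ∈ Set.Ico (d ^ (D / α)) (d ^ ((D + 1) / α))) : ⌊α * Real.logb d x⌋₊ = D := by
  have hx0 : 0 < x := hx.1.trans_lt' (by positivity)
  have h₁ := (Real.le_logb_iff_rpow_le hd hx0).2 hx.1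
  have h₂ := (Real.logb_lt_iff_lt_rpow hd hx0).2 hx.2
  rw [div_le_iff₀' hα] at h₁
  rw [lt_div_iff₀' hα] at h₂
  exact (Nat.floor_eq_iff (h₁.trans' D.cast_nonneg)).2 ⟨h₁, h₂⟩

lemma mul_logb_le_girthBound (hd : 1 < d) (hα : 0 < α) {x : ℝ} (hx0 : 0 < x)
    (hx : x < d ^ ((D + 1) / α)) : 2 * α * Real.logb (2 * d - 1) x ≤ girthBound d D := by
  refine le_trans ?_ (Nat.le_ceil _)
  rw [← Real.mul_logb (a := 2 * d - 1) (b := d) (c := x) (by linarith) (by linarith) (by linarith)]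
  have hlog := (Real.logb_lt_iff_lt_rpow hd hx0).2 hx
  rw [lt_div_iff₀' hα] at hlog
  nlinarith [one_le_two_mul_logb hd]

lemma pow_le_rpow_of_rpow_div_le (hd : 0 ≤ d) (hα : 0 < α) {x : ℝ} (hx : d ^ (D / α) ≤ x) :
    d ^ D ≤ x ^ α :=
  calc d ^ D = (d ^ (D / α)) ^ α := by
        rw [← Real.rpow_mul hd, div_mul_cancel₀ _ hα.ne', Real.rpow_natCast]
    _ ≤ x ^ α := Real.rpow_le_rpow (by positivity) hx hα.le

lemma exists_parameters {e : ℕ} (he : 1 ≤ e) (hα : 0 < α)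
    (hαe : ((e + 1 : ℕ) : ℝ) ^ (2 * α) < 2 * (e + 1 : ℕ) - 1) :
    ∃ a t : ℝ, 1 ≤ a ∧ 1 ≤ t ∧ a + e ≤ t * a ∧ 2 * a + e ≤ t ^ 2 + 1 ∧
      ∀ᶠ D : ℕ in atTop, ∃ M K : ℕ,
        (a + t) * ∑ i ∈ Finset.range (girthBound (e + 1 : ℕ) D + 1), t ^ i < M ∧
        4 * ∑ i ∈ Finset.range (girthBound (e + 1 : ℕ) D + 1), (e + 1) ^ i < K ∧
        (4 * (2 * D + 3) * M : ℝ) ≤ (e + 1 : ℕ) ^ D ∧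
        ((2 * ((2 * D + 3) * M * (e + 2) + K) : ℕ) : ℝ) ∈
          Set.Ico (((e + 1 : ℕ) : ℝ) ^ (D / α)) ((e + 1 : ℕ) ^ ((D + 1) / α)) := by
  have he' : (1 : ℝ) ≤ e := by exact_mod_cast he
  obtain ⟨a, t, ha, ht, hte, h₁, h₂⟩ := exists_growth_rate he'
  have hd : (1 : ℝ) < (e + 1 : ℕ) := by exact_mod_cast (by omega : 1 < e + 1)
  have htd : t ^ 2 < 2 * (e + 1 : ℕ) - 1 := by
    push_cast
    linarith
  refine ⟨a, t, ha, ht.le, h₁, h₂, ?_⟩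
  filter_upwards [eventually_exists_supportSize hd ht htd (b := a + t) (c := 2 * (e + 2))
    (by linarith) (by positivity), eventually_pow_girthBound_le hd hα hαe 4] with D ⟨M, hM, hMD⟩ hD
  obtain ⟨K, hK, hm⟩ := exists_outerSize (by omega) hα hαe hD (by positivity) hMD
  refine ⟨M, K, hM, hK, hMD.trans' ?_, ?_⟩
  · gcongr
    linarith
  · convert hm using 1
    push_cast
    ring

end Parameters

theorem stmt_0_general {d : ℕ} (hd : 2 ≤ d) {α : ℝ} (hα : 0 < α)
    (hαd : (d : ℝ) ^ (2 * α) < 2 * d - 1) {ε : ℝ} (hε : ε ≤ 1) :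
    {m : ℕ | 0 < m ∧ ∃ G : SimpleGraph (Fin m),
      IsRegular G (d + 1) ∧
      girthGe G (2 * α * Real.logb (2 * (d : ℝ) - 1) m) ∧
      LocalizedSpectrum G ⌊α * Real.logb d m⌋₊ ε ((m : ℝ) ^ α)}.Infinite := by
  obtain ⟨e, rfl⟩ : ∃ e, d = e + 1 := ⟨d - 1, by omega⟩
  obtain ⟨a, t, ha, ht, h₁, h₂, hparams⟩ := exists_parameters (by omega) hα hαd
  have hd' : (1 : ℝ) < (e + 1 : ℕ) := by exact_mod_cast hd
  have hlim : Filter.Tendsto (fun D : ℕ => ((e + 1 : ℕ) : ℝ) ^ (D / α)) .atTop .atTop :=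
    (tendsto_rpow_atTop_of_base_gt_one _ hd').comp
      (tendsto_natCast_atTop_atTop.atTop_div_const hα)
  refine Set.infinite_of_forall_exists_gt fun N => ?_
  obtain ⟨D, ⟨⟨M, K, hM, hK, hMD, hm⟩, hN⟩, hD⟩ :=
    ((hparams.and (hlim.eventually_gt_atTop (N : ℝ))).and (Filter.eventually_ge_atTop 1)).exists
  obtain ⟨G, hreg, hgirth, hspec⟩ := exists_isRegular_fin_localizedSpectrum (n := 2 * D) (r := D)
    (by omega) (by have := succ_le_girthBound (D := D) hd'; omega) ha ht h₁ h₂ hM hK hε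
  have hNm := Nat.cast_lt.1 (hN.trans_le hm.1)
  refine ⟨_, ⟨hNm.pos, G, hreg, ?_, ?_⟩, hNm⟩
  · rintro _ rfl
    exact (mul_logb_le_girthBound hd' hα (by exact_mod_cast hNm.pos) hm.2).trans
      (by exact_mod_cast hgirth)
  · rw [floor_mul_logb_eq hd' hα hm]
    have hbound := hMD.trans (pow_le_rpow_of_rpow_div_le (by positivity) hα hm.1)
    exact hspec.mono (by exact_mod_cast hbound)

/-- Alon–Ganguly–Srivastava (Theorem 1.1). -/
theorem stmt_0 (d : ℕ) (hdp : Nat.Prime d) (hdodd : Odd d)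
    (α : ℝ) (hα : α ∈ Set.Ioo (0 : ℝ) (1 / 6))
    (ε : ℝ) (hε : ε ∈ Set.Ioo (0 : ℝ) 1) :
    ∃ C : ℝ, 0 < C ∧
      {m : ℕ | 0 < m ∧ ∃ G : SimpleGraph (Fin m),
        IsRegular G (d + 1) ∧
        girthGe G (2 * α * Real.logb (2 * (d : ℝ) - 1) m) ∧
        LocalizedSpectrum G ⌊α * Real.logb d m⌋₊ ε (C * (m : ℝ) ^ α)}.Infinite := by
  have hd : (2 : ℝ) ≤ d := by exact_mod_cast hdp.two_le
  have hαd : (d : ℝ) ^ (2 * α) < 2 * d - 1 :=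
    calc (d : ℝ) ^ (2 * α) ≤ d ^ (1 : ℝ) :=
          Real.rpow_le_rpow_of_exponent_le (by linarith) (by linarith [hα.2])
      _ < 2 * d - 1 := by
          rw [Real.rpow_one]
          linarith
  exact ⟨1, one_pos, by simpa only [one_mul] using stmt_0_general hdp.two_le hα.1 hαd hε.2.le⟩

end Formal
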